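/- For each d let S_d be a nonnegative concave function on states of d-level systems that vanishes on pure states and satisfies S_d(ρ_A) = s(p), where p is the decreasing vector of nonzero eigenvalues of ρ_A and s is independent of d. For any state ρ of a finite bipartite system AB, with A of dimension d, define the convex roof E^{cr}(ρ) = inf Σ_m P_m S_d(tr_B |Ψ_m⟩⟨Ψ_m|), the infimum over all ensembles {P_m, |Ψ_m⟩} of pure states with Σ_m P_m |Ψ_m⟩⟨Ψ_m| = ρ. Then E^{cr} is an entanglement monotone, and for every state ρ_A of A, the maximum of E^{cr}(ρ) over all states ρ of composite systems AB with tr_B ρ = ρ_A equals S_d(ρ_A). -/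

import Mathlib

/-!
The convex roof of a concave function of the reduced state is an entanglement monotone, and
it is maximised, over states with a given reduction, by a purification.

Two facts carry the proof. First, if `X` is the coefficient matrix of a bipartite vector `Ψ`,
its reductions are `X Xᴴ` and `(Xᴴ X)ᵀ`, which have the same nonzero eigenvalues, so the
entropy may be computed on either side (`S_ptrace_comm`). Second, a local operation on one
side does not change the average reduced state on the other side. Concavity on that other
side therefore shows that a Kraus family sends a pure state to an ensemble of pure states of
no larger average entropy (`kraus_step_A`, `kraus_step_B`). Applying this to each member of
an arbitrary ensemble for `ρ` gives an ensemble for the image of `ρ`, whence monotonicity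
(`Ecr_mono`). Storing the outcome in an ancilla `|k⟩` changes the reduction on one side only,
and the entropy can be read off from the other side.

For the maximum, concavity on A gives `Ecr S ρ ≤ S (tr_B ρ)` for every `ρ`. Equality holds for
a purification of `ρ_A`, because a pure state has only trivial ensemble decompositions
(`pureState_eq_of_sum`).
-/

open Matrix
open scoped ComplexOrder Kronecker Classical

noncomputable section

/-- A density matrix: positive semidefinite with unit trace. -/
def IsDensityMatrix {n : Type} [Fintype n] (ρ : Matrix n n ℂ) : Prop :=
  ρ.PosSemidef ∧ ρ.trace = 1

/-- An orthonormal family of vectors. -/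
def OrthonormalFamily {ι n : Type} [Fintype n] (v : ι → n → ℂ) : Prop :=
  ∀ i j, star (v i) ⬝ᵥ v j = if i = j then 1 else 0

/-- The rank-one projector `|ψ⟩⟨ψ|`. -/
def pureState {n : Type} (ψ : n → ℂ) : Matrix n n ℂ :=
  Matrix.vecMulVec ψ (star ψ)

def IsPureState {n : Type} [Fintype n] (ρ : Matrix n n ℂ) : Prop :=
  ∃ ψ : n → ℂ, star ψ ⬝ᵥ ψ = 1 ∧ ρ = pureState ψ

/-- Partial trace over the second (B) factor. -/
def ptraceB {nA nB : Type} [Fintype nB] (ρ : Matrix (nA × nB) (nA × nB) ℂ) :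
    Matrix nA nA ℂ :=
  Matrix.of fun i j => ∑ b, ρ (i, b) (j, b)

/-- Partial trace over the first (A) factor. -/
def ptraceA {nA nB : Type} [Fintype nA] (ρ : Matrix (nA × nB) (nA × nB) ℂ) :
    Matrix nB nB ℂ :=
  Matrix.of fun i j => ∑ a, ρ (a, i) (a, j)

/-- The multiset of eigenvalues of a Hermitian matrix. -/
def eigMultiset {n : Type} [Fintype n] [DecidableEq n] {ρ : Matrix n n ℂ}
    (h : ρ.IsHermitian) : Multiset ℝ :=
  Finset.univ.val.map h.eigenvalues

/-- Eigenvalues in decreasing order, as a list. -/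
def eigListDesc {n : Type} [Fintype n] [DecidableEq n] {ρ : Matrix n n ℂ}
    (h : ρ.IsHermitian) : List ℝ :=
  ((eigMultiset h).sort (· ≤ ·)).reverse

/-- Nonzero eigenvalues in decreasing order, as a list. -/
def nonzeroEigListDesc {n : Type} [Fintype n] [DecidableEq n] {ρ : Matrix n n ℂ}
    (h : ρ.IsHermitian) : List ℝ :=
  (eigListDesc h).filter (fun a => a ≠ 0)

/-- The `i`-th largest eigenvalue. -/
def eigDesc {d : ℕ} {ρ : Matrix (Fin d) (Fin d) ℂ} (h : ρ.IsHermitian) : Fin d → ℝ :=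
  fun i => (eigListDesc h).getD i 0

/-- `q` majorizes `p` (both lists of reals in decreasing order): all partial sums of
`q` dominate those of `p`, with equal total sums. -/
def ListMajorizes (q p : List ℝ) : Prop :=
  (∀ k : ℕ, (p.take k).sum ≤ (q.take k).sum) ∧ p.sum = q.sum

/-- The type of candidate entanglement measures: a real-valued function on (matrices over)
every finite bipartite system. -/
abbrev EMfun : Type 1 :=
  ∀ (nA nB : Type) [Fintype nA] [DecidableEq nA] [Fintype nB] [DecidableEq nB],
    Matrix (nA × nB) (nA × nB) ℂ → ℝ

/-- A separable state: a convex mixture of pure product states. -/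
def SeparableState {nA nB : Type} [Fintype nA] [Fintype nB]
    (ρ : Matrix (nA × nB) (nA × nB) ℂ) : Prop :=
  ∃ (M : ℕ) (P : Fin M → ℝ) (φ : Fin M → nA → ℂ) (χ : Fin M → nB → ℂ),
    (∀ m, 0 ≤ P m) ∧ (∑ m, P m = 1) ∧
    (∀ m, star (φ m) ⬝ᵥ φ m = 1) ∧ (∀ m, star (χ m) ⬝ᵥ χ m = 1) ∧
    ρ = ∑ m, P m • pureState (fun q => φ m q.1 * χ m q.2)

/-- A (dimension changing) Kraus family: `∑ₖ Mₖ† Mₖ = 1`. -/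
def IsKrausFamily {n n' K : Type} [Fintype n] [DecidableEq n] [Fintype n'] [Fintype K]
    (M : K → Matrix n' n ℂ) : Prop :=
  ∑ k, (M k)ᴴ * M k = 1

/-- Local operation on A: `ρ ↦ ∑ₖ (Mₖ ⊗ 1) ρ (Mₖ ⊗ 1)†`. -/
def krausApplyA {nA nA' nB K : Type} [Fintype nA] [Fintype nA'] [Fintype nB]
    [DecidableEq nB] [Fintype K] (M : K → Matrix nA' nA ℂ)
    (ρ : Matrix (nA × nB) (nA × nB) ℂ) : Matrix (nA' × nB) (nA' × nB) ℂ :=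
  ∑ k, (M k ⊗ₖ (1 : Matrix nB nB ℂ)) * ρ * (M k ⊗ₖ (1 : Matrix nB nB ℂ))ᴴ

/-- Local operation on B: `ρ ↦ ∑ₖ (1 ⊗ Mₖ) ρ (1 ⊗ Mₖ)†`. -/
def krausApplyB {nA nB nB' K : Type} [Fintype nA] [DecidableEq nA] [Fintype nB]
    [Fintype nB'] [Fintype K] (M : K → Matrix nB' nB ℂ)
    (ρ : Matrix (nA × nB) (nA × nB) ℂ) : Matrix (nA × nB') (nA × nB') ℂ :=
  ∑ k, ((1 : Matrix nA nA ℂ) ⊗ₖ M k) * ρ * ((1 : Matrix nA nA ℂ) ⊗ₖ M k)ᴴ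

/-- Local operation on A with the classical outcome stored in an ancilla close to B:
`ρ ↦ ∑ₖ (Mₖ ⊗ 1) ρ (Mₖ ⊗ 1)† ⊗ |k⟩⟨k|` (written out entrywise, the ancilla being the
second factor of the new B system `nB × K`). -/
def flaggedKrausA {nA nA' nB K : Type} [Fintype nA] [Fintype nA'] [Fintype nB]
    [DecidableEq nB] [DecidableEq K] (M : K → Matrix nA' nA ℂ)
    (ρ : Matrix (nA × nB) (nA × nB) ℂ) :
    Matrix (nA' × nB × K) (nA' × nB × K) ℂ :=
  Matrix.of fun x y =>
    if x.2.2 = y.2.2 then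
      ((M x.2.2 ⊗ₖ (1 : Matrix nB nB ℂ)) * ρ * (M x.2.2 ⊗ₖ (1 : Matrix nB nB ℂ))ᴴ)
        (x.1, x.2.1) (y.1, y.2.1)
    else 0

/-- Local operation on B with the classical outcome stored in an ancilla close to A. -/
def flaggedKrausB {nA nB nB' K : Type} [Fintype nA] [DecidableEq nA] [Fintype nB]
    [Fintype nB'] [DecidableEq K] (M : K → Matrix nB' nB ℂ)
    (ρ : Matrix (nA × nB) (nA × nB) ℂ) :
    Matrix ((nA × K) × nB') ((nA × K) × nB') ℂ :=
  Matrix.of fun x y =>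
    if x.1.2 = y.1.2 then
      (((1 : Matrix nA nA ℂ) ⊗ₖ M x.1.2) * ρ * ((1 : Matrix nA nA ℂ) ⊗ₖ M x.1.2)ᴴ)
        (x.1.1, x.2) (y.1.1, y.2)
    else 0

/-- An entanglement monotone: nonnegative on states of all finite bipartite systems,
vanishing on separable states, and nonincreasing under local Kraus maps (on either side,
possibly changing the local dimension) and under local Kraus maps whose outcome is stored
in an orthonormal ancilla adjoined to the other system. -/
structure IsEntanglementMonotone (E : EMfun) : Prop where
  nonneg : ∀ (nA nB : Type) [Fintype nA] [DecidableEq nA] [Fintype nB] [DecidableEq nB]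
    (ρ : Matrix (nA × nB) (nA × nB) ℂ), IsDensityMatrix ρ → 0 ≤ E nA nB ρ
  vanish_separable : ∀ (nA nB : Type) [Fintype nA] [DecidableEq nA] [Fintype nB]
    [DecidableEq nB] (ρ : Matrix (nA × nB) (nA × nB) ℂ),
    IsDensityMatrix ρ → SeparableState ρ → E nA nB ρ = 0
  mono_krausA : ∀ (nA nA' nB K : Type) [Fintype nA] [DecidableEq nA] [Fintype nA']
    [DecidableEq nA'] [Fintype nB] [DecidableEq nB] [Fintype K]
    (M : K → Matrix nA' nA ℂ), IsKrausFamily M →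
    ∀ ρ : Matrix (nA × nB) (nA × nB) ℂ, IsDensityMatrix ρ →
      E nA' nB (krausApplyA M ρ) ≤ E nA nB ρ
  mono_krausB : ∀ (nA nB nB' K : Type) [Fintype nA] [DecidableEq nA] [Fintype nB]
    [DecidableEq nB] [Fintype nB'] [DecidableEq nB'] [Fintype K]
    (M : K → Matrix nB' nB ℂ), IsKrausFamily M →
    ∀ ρ : Matrix (nA × nB) (nA × nB) ℂ, IsDensityMatrix ρ →
      E nA nB' (krausApplyB M ρ) ≤ E nA nB ρ
  mono_flaggedA : ∀ (nA nA' nB K : Type) [Fintype nA] [DecidableEq nA] [Fintype nA']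
    [DecidableEq nA'] [Fintype nB] [DecidableEq nB] [Fintype K] [DecidableEq K]
    (M : K → Matrix nA' nA ℂ), IsKrausFamily M →
    ∀ ρ : Matrix (nA × nB) (nA × nB) ℂ, IsDensityMatrix ρ →
      E nA' (nB × K) (flaggedKrausA M ρ) ≤ E nA nB ρ
  mono_flaggedB : ∀ (nA nB nB' K : Type) [Fintype nA] [DecidableEq nA] [Fintype nB]
    [DecidableEq nB] [Fintype nB'] [DecidableEq nB'] [Fintype K] [DecidableEq K]
    (M : K → Matrix nB' nB ℂ), IsKrausFamily M →
    ∀ ρ : Matrix (nA × nB) (nA × nB) ℂ, IsDensityMatrix ρ →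
      E (nA × K) nB' (flaggedKrausB M ρ) ≤ E nA nB ρ

/-- `Sloc E nA ρA` : the maximal entanglement `E(ρ)` over all states `ρ` of all composite
systems `A⊗B` whose reduced density matrix on A is `ρA` (eq. (1) of the paper). -/
def Sloc (E : EMfun) (nA : Type) [Fintype nA] [DecidableEq nA]
    (ρA : Matrix nA nA ℂ) : ℝ :=
  sSup { x : ℝ | ∃ (nB : Type) (_ : Fintype nB) (_ : DecidableEq nB)
    (ρ : Matrix (nA × nB) (nA × nB) ℂ),
    IsDensityMatrix ρ ∧ ptraceB ρ = ρA ∧ x = E nA nB ρ }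


/-- A family of local entropy-like functions, one for each finite local system. -/
abbrev SFam : Type 1 :=
  ∀ (n : Type) [Fintype n] [DecidableEq n], Matrix n n ℂ → ℝ

/-- The convex roof `E^{cr}(ρ) = inf ∑ₘ Pₘ S(tr_B |Ψₘ⟩⟨Ψₘ|)` over all finite ensembles
of pure states `{Pₘ, Ψₘ}` with `∑ₘ Pₘ |Ψₘ⟩⟨Ψₘ| = ρ`. -/
def Ecr (S : SFam) {nA nB : Type} [Fintype nA] [DecidableEq nA] [Fintype nB]
    [DecidableEq nB] (ρ : Matrix (nA × nB) (nA × nB) ℂ) : ℝ :=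
  sInf { r : ℝ | ∃ (M : ℕ) (P : Fin M → ℝ) (Ψ : Fin M → nA × nB → ℂ),
    (∀ m, 0 ≤ P m) ∧ (∀ m, star (Ψ m) ⬝ᵥ Ψ m = 1) ∧
    (∑ m, P m • pureState (Ψ m)) = ρ ∧
    r = ∑ m, P m * S nA (ptraceB (pureState (Ψ m))) }

/-- The convex roof as a candidate entanglement measure on all bipartite systems. -/
def EcrEM (S : SFam) : EMfun := fun nA nB iA dA iB dB ρ => @Ecr S nA nB iA dA iB dB ρ

/-! ### Reductions of pure states and their spectra -/

/-- The matrix of coefficients `X a b = Ψ (a, b)` of a bipartite vector. -/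
def coeffMatrix {nA nB : Type} (Ψ : nA × nB → ℂ) : Matrix nA nB ℂ :=
  Matrix.of fun a b => Ψ (a, b)

lemma ptraceB_pureState {nA nB : Type} [Fintype nB] (Ψ : nA × nB → ℂ) :
    ptraceB (pureState Ψ) = coeffMatrix Ψ * (coeffMatrix Ψ)ᴴ := by
  ext i j
  simp [ptraceB, pureState, coeffMatrix, vecMulVec_apply, mul_apply]

lemma ptraceA_pureState {nA nB : Type} [Fintype nA] (Ψ : nA × nB → ℂ) :
    ptraceA (pureState Ψ) = ((coeffMatrix Ψ)ᴴ * coeffMatrix Ψ)ᵀ := by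
  ext i j
  simp [ptraceA, pureState, coeffMatrix, vecMulVec_apply, mul_apply, mul_comm]

lemma trace_pureState {n : Type} [Fintype n] (ψ : n → ℂ) :
    (pureState ψ).trace = star ψ ⬝ᵥ ψ := by
  simp [pureState, trace_vecMulVec, dotProduct_comm]

lemma trace_ptraceB {nA nB : Type} [Fintype nA] [Fintype nB]
    (ρ : Matrix (nA × nB) (nA × nB) ℂ) : (ptraceB ρ).trace = ρ.trace := by
  simp [ptraceB, trace, Fintype.sum_prod_type]

lemma trace_ptraceA {nA nB : Type} [Fintype nA] [Fintype nB]
    (ρ : Matrix (nA × nB) (nA × nB) ℂ) : (ptraceA ρ).trace = ρ.trace := by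
  simp [ptraceA, trace, Fintype.sum_prod_type_right]

lemma isDensityMatrix_pureState {n : Type} [Fintype n] {ψ : n → ℂ} (h : star ψ ⬝ᵥ ψ = 1) :
    IsDensityMatrix (pureState ψ) :=
  ⟨posSemidef_vecMulVec_self_star ψ, by rw [trace_pureState, h]⟩

lemma isDensityMatrix_ptraceB {nA nB : Type} [Fintype nA] [Fintype nB] {Ψ : nA × nB → ℂ}
    (h : star Ψ ⬝ᵥ Ψ = 1) : IsDensityMatrix (ptraceB (pureState Ψ)) := by
  refine ⟨?_, by rw [trace_ptraceB, trace_pureState, h]⟩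
  rw [ptraceB_pureState]
  exact posSemidef_self_mul_conjTranspose _

lemma isDensityMatrix_ptraceA {nA nB : Type} [Fintype nA] [Fintype nB] {Ψ : nA × nB → ℂ}
    (h : star Ψ ⬝ᵥ Ψ = 1) : IsDensityMatrix (ptraceA (pureState Ψ)) := by
  refine ⟨?_, by rw [trace_ptraceA, trace_pureState, h]⟩
  rw [ptraceA_pureState]
  exact (posSemidef_conjTranspose_mul_self _).transpose

lemma ptraceB_sum {nA nB ι : Type} [Fintype nB] [Fintype ι]
    (P : ι → ℝ) (σ : ι → Matrix (nA × nB) (nA × nB) ℂ) :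
    ptraceB (∑ i, P i • σ i) = ∑ i, P i • ptraceB (σ i) := by
  ext a b
  simp only [ptraceB, of_apply, Matrix.sum_apply, Matrix.smul_apply, Finset.smul_sum]
  exact Finset.sum_comm

lemma ptraceA_sum {nA nB ι : Type} [Fintype nA] [Fintype ι]
    (P : ι → ℝ) (σ : ι → Matrix (nA × nB) (nA × nB) ℂ) :
    ptraceA (∑ i, P i • σ i) = ∑ i, P i • ptraceA (σ i) := by
  ext a b
  simp only [ptraceA, of_apply, Matrix.sum_apply, Matrix.smul_apply, Finset.smul_sum]
  exact Finset.sum_comm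

/-- The nonzero eigenvalue list depends only on the nonzero roots of the characteristic
polynomial. -/
lemma nonzeroEigListDesc_congr {n m : Type} [Fintype n] [DecidableEq n] [Fintype m]
    [DecidableEq m] {ρ : Matrix n n ℂ} {σ : Matrix m m ℂ} (hρ : ρ.IsHermitian)
    (hσ : σ.IsHermitian)
    (h : ρ.charpoly.roots.filter (· ≠ 0) = σ.charpoly.roots.filter (· ≠ 0)) :
    nonzeroEigListDesc hρ = nonzeroEigListDesc hσ := by
  have key : ∀ {k : Type} [Fintype k] [DecidableEq k] {τ : Matrix k k ℂ} (hτ : τ.IsHermitian),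
      (eigMultiset hτ).filter (· ≠ 0) =
        (τ.charpoly.roots.filter (· ≠ 0)).map Complex.re := by
    intro k _ _ τ hτ
    rw [hτ.roots_charpoly_eq_eigenvalues, eigMultiset, Multiset.filter_map, Multiset.filter_map,
      Multiset.map_map]
    simp [Function.comp_def]
  have hm : (eigMultiset hρ).filter (· ≠ 0) = (eigMultiset hσ).filter (· ≠ 0) := by
    rw [key, key, h]
  -- A sorted list is determined by its underlying multiset.
  refine List.Perm.eq_of_pairwise' (r := (· ≥ ·)) ?_ ?_ ?_
  · exact (List.pairwise_reverse.2 (Multiset.pairwise_sort _ _)).filter _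
  · exact (List.pairwise_reverse.2 (Multiset.pairwise_sort _ _)).filter _
  · rw [← Multiset.coe_eq_coe]
    have e : ∀ {k : Type} [Fintype k] [DecidableEq k] {τ : Matrix k k ℂ} (hτ : τ.IsHermitian),
        ((nonzeroEigListDesc hτ : List ℝ) : Multiset ℝ) = (eigMultiset hτ).filter (· ≠ 0) := by
      intro k _ _ τ hτ
      conv_rhs => rw [← Multiset.sort_eq (eigMultiset hτ) (· ≤ ·)]
      rw [nonzeroEigListDesc, eigListDesc, ← Multiset.filter_coe, Multiset.coe_reverse]
    rw [e, e, hm]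

/-- `X Y` and `Y X` have the same nonzero eigenvalues, with multiplicity. -/
lemma filter_roots_charpoly_mul_comm {n m : Type} [Fintype n] [DecidableEq n] [Fintype m]
    [DecidableEq m] (X : Matrix n m ℂ) (Y : Matrix m n ℂ) :
    (X * Y).charpoly.roots.filter (· ≠ 0) = (Y * X).charpoly.roots.filter (· ≠ 0) := by
  have h := congrArg (fun p => p.roots.filter (· ≠ 0)) (charpoly_mul_comm' X Y)
  have h1 := (charpoly_monic (X * Y)).ne_zero
  have h2 := (charpoly_monic (Y * X)).ne_zero
  rw [Polynomial.roots_mul (mul_ne_zero (by simp) h1),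
    Polynomial.roots_mul (mul_ne_zero (by simp) h2)] at h
  simpa [Multiset.filter_add, Multiset.filter_singleton, Multiset.filter_nsmul] using h

/-- Both reductions of a bipartite pure state have the same entropy. -/
lemma S_ptrace_comm {S : SFam} {s : List ℝ → ℝ}
    (hspec : ∀ (n : Type) [Fintype n] [DecidableEq n] (σ : Matrix n n ℂ)
      (hσ : IsDensityMatrix σ), S n σ = s (nonzeroEigListDesc hσ.1.1))
    {nA nB : Type} [Fintype nA] [DecidableEq nA] [Fintype nB] [DecidableEq nB]
    {Ψ : nA × nB → ℂ} (h : star Ψ ⬝ᵥ Ψ = 1) :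
    S nA (ptraceB (pureState Ψ)) = S nB (ptraceA (pureState Ψ)) := by
  rw [hspec nA _ (isDensityMatrix_ptraceB h), hspec nB _ (isDensityMatrix_ptraceA h)]
  congr 1
  apply nonzeroEigListDesc_congr
  rw [ptraceB_pureState, ptraceA_pureState, charpoly_transpose]
  exact filter_roots_charpoly_mul_comm _ _

/-! ### Ensembles of pure states and the convex roof -/

/-- Every vector is a nonnegative multiple of a unit vector (which is arbitrary when the
vector is zero), here expressed at the level of projectors. -/
lemma exists_normalize {n : Type} [Fintype n] [Nonempty n] (x : n → ℂ) :
    ∃ (p : ℝ) (y : n → ℂ), 0 ≤ p ∧ star y ⬝ᵥ y = 1 ∧ p • pureState y = pureState x := by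
  by_cases hx : x = 0
  · obtain ⟨i⟩ := ‹Nonempty n›
    refine ⟨0, Pi.single i 1, le_rfl, by simp, ?_⟩
    subst hx
    simp [pureState]
  · have h0 : (0 : ℂ) ≤ star x ⬝ᵥ x := dotProduct_star_self_nonneg x
    have h1 : star x ⬝ᵥ x ≠ 0 := fun h => hx (dotProduct_star_self_eq_zero.1 h)
    obtain ⟨p, hp, hpx⟩ : ∃ p : ℝ, 0 ≤ p ∧ (p : ℂ) = star x ⬝ᵥ x := by
      rw [Complex.nonneg_iff] at h0
      exact ⟨(star x ⬝ᵥ x).re, h0.1, Complex.ext (by simp) (by simpa using h0.2)⟩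
    have hp0 : (p : ℂ) ≠ 0 := by rwa [hpx]
    have hs : ((√p : ℝ) : ℂ) * (√p : ℝ) = p := by
      rw [← Complex.ofReal_mul, Real.mul_self_sqrt hp]
    have hs' : ((√p : ℝ) : ℂ)⁻¹ * ((√p : ℝ) : ℂ)⁻¹ = (p : ℂ)⁻¹ := by
      rw [← mul_inv, hs]
    refine ⟨p, ((√p : ℝ) : ℂ)⁻¹ • x, hp, ?_, ?_⟩
    · rw [star_smul, smul_dotProduct, dotProduct_smul, ← hpx]
      simp only [smul_eq_mul, star_inv₀, Complex.star_def, Complex.conj_ofReal]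
      rw [← mul_assoc, hs', inv_mul_cancel₀ hp0]
    · ext i j
      simp only [pureState, Matrix.smul_apply, vecMulVec_apply, Pi.star_apply, Pi.smul_apply,
        smul_eq_mul, star_mul', star_inv₀, Complex.star_def, Complex.conj_ofReal,
        Complex.real_smul]
      calc (p : ℂ) * (((√p : ℝ) : ℂ)⁻¹ * x i * (((√p : ℝ) : ℂ)⁻¹ * (starRingEnd ℂ) (x j)))
          = p * (((√p : ℝ) : ℂ)⁻¹ * ((√p : ℝ) : ℂ)⁻¹) * (x i * (starRingEnd ℂ) (x j)) := by ring
        _ = _ := by rw [hs', mul_inv_cancel₀ hp0, one_mul]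

lemma sum_weights_eq_one {n ι : Type} [Fintype n] [Fintype ι] {P : ι → ℝ} {Ψ : ι → n → ℂ}
    (hu : ∀ i, star (Ψ i) ⬝ᵥ Ψ i = 1) (ht : (∑ i, P i • pureState (Ψ i)).trace = 1) :
    ∑ i, P i = 1 := by
  simp only [trace_sum, trace_smul, trace_pureState, hu, Complex.real_smul, mul_one] at ht
  exact_mod_cast ht

lemma concave_fintype {S : SFam}
    (hconcave : ∀ (n : Type) [Fintype n] [DecidableEq n] (M : ℕ) (P : Fin M → ℝ)
      (σ : Fin M → Matrix n n ℂ), (∀ m, 0 ≤ P m) → (∑ m, P m) = 1 →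
      (∀ m, IsDensityMatrix (σ m)) →
      ∑ m, P m * S n (σ m) ≤ S n (∑ m, P m • σ m))
    {n ι : Type} [Fintype n] [DecidableEq n] [Fintype ι] (P : ι → ℝ) (σ : ι → Matrix n n ℂ)
    (hP : ∀ i, 0 ≤ P i) (hsum : ∑ i, P i = 1) (hσ : ∀ i, IsDensityMatrix (σ i)) :
    ∑ i, P i * S n (σ i) ≤ S n (∑ i, P i • σ i) := by
  have e := (Fintype.equivFin ι).symm
  have h := hconcave n (Fintype.card ι) (P ∘ e) (σ ∘ e) (fun _ => hP _)
    ((Equiv.sum_comp e P).trans hsum) (fun _ => hσ _)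
  have e1 := Equiv.sum_comp e (fun i => P i * S n (σ i))
  have e2 := Equiv.sum_comp e (fun i => P i • σ i)
  simp only [Function.comp_apply] at h
  rwa [e1, e2] at h

/-- The convex roof is bounded by the average over any ensemble, indexed by any finite
type. -/
lemma Ecr_le {S : SFam}
    (hnonneg : ∀ (n : Type) [Fintype n] [DecidableEq n] (σ : Matrix n n ℂ),
      IsDensityMatrix σ → 0 ≤ S n σ)
    {nA nB ι : Type} [Fintype nA] [DecidableEq nA] [Fintype nB] [DecidableEq nB] [Fintype ι]
    {ρ : Matrix (nA × nB) (nA × nB) ℂ} (P : ι → ℝ) (Ψ : ι → nA × nB → ℂ)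
    (hP : ∀ i, 0 ≤ P i) (hu : ∀ i, star (Ψ i) ⬝ᵥ Ψ i = 1)
    (hρ : ∑ i, P i • pureState (Ψ i) = ρ) :
    Ecr S ρ ≤ ∑ i, P i * S nA (ptraceB (pureState (Ψ i))) := by
  have e := (Fintype.equivFin ι).symm
  refine csInf_le ⟨0, ?_⟩ ⟨Fintype.card ι, P ∘ e, Ψ ∘ e, fun _ => hP _, fun _ => hu _, ?_, ?_⟩
  · rintro r ⟨M, P, Ψ, hP, hu, -, rfl⟩
    exact Finset.sum_nonneg fun m _ =>
      mul_nonneg (hP m) (hnonneg _ _ (isDensityMatrix_ptraceB (hu m)))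
  · rw [← hρ]
    exact Equiv.sum_comp e (fun i => P i • pureState (Ψ i))
  · exact (Equiv.sum_comp e (fun i => P i * S nA (ptraceB (pureState (Ψ i))))).symm

lemma nonempty_of_isDensityMatrix {n : Type} [Fintype n] {ρ : Matrix n n ℂ}
    (h : IsDensityMatrix ρ) : Nonempty n := by
  by_contra hn
  rw [not_nonempty_iff] at hn
  simpa using h.2

/-- To bound the convex roof of a state below, it suffices to bound every ensemble
average; some ensemble exists, so the infimum is not the junk value `sInf ∅`. -/
lemma le_Ecr {S : SFam}
    {nA nB : Type} [Fintype nA] [DecidableEq nA] [Fintype nB] [DecidableEq nB]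
    {ρ : Matrix (nA × nB) (nA × nB) ℂ} (hρ : IsDensityMatrix ρ) {c : ℝ}
    (hc : ∀ (M : ℕ) (P : Fin M → ℝ) (Ψ : Fin M → nA × nB → ℂ), (∀ m, 0 ≤ P m) →
      (∀ m, star (Ψ m) ⬝ᵥ Ψ m = 1) → ∑ m, P m • pureState (Ψ m) = ρ →
      c ≤ ∑ m, P m * S nA (ptraceB (pureState (Ψ m)))) :
    c ≤ Ecr S ρ := by
  have := nonempty_of_isDensityMatrix hρ
  refine le_csInf ?_ ?_
  · obtain ⟨m, v, hv⟩ := posSemidef_iff_eq_sum_vecMulVec.1 hρ.1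
    choose P Ψ hP hu h using fun i => exists_normalize (v i)
    exact ⟨_, m, P, Ψ, hP, hu, by rw [hv]; exact Finset.sum_congr rfl fun i _ => h i, rfl⟩
  · rintro r ⟨M, P, Ψ, hP, hu, h, rfl⟩
    exact hc M P Ψ hP hu h

/-- A pure state has no nontrivial ensemble decomposition: every member of positive weight
is the state itself. -/
lemma pureState_eq_of_sum {n ι : Type} [Fintype n] [Fintype ι] {P : ι → ℝ} {Φ : ι → n → ℂ}
    {Ψ : n → ℂ} (hP : ∀ i, 0 ≤ P i) (hu : ∀ i, star (Φ i) ⬝ᵥ Φ i = 1)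
    (hΨ : star Ψ ⬝ᵥ Ψ = 1) (h : ∑ i, P i • pureState (Φ i) = pureState Ψ) (i : ι)
    (hi : P i ≠ 0) : pureState (Φ i) = pureState Ψ := by
  have q : ∀ x y : n → ℂ, star x ⬝ᵥ (pureState y *ᵥ x) = (star x ⬝ᵥ y) * star (star x ⬝ᵥ y) := by
    intro x y
    rw [pureState, vecMulVec_mulVec, dotProduct_smul, star_dotProduct x y, star_star]
    rfl
  -- The component `x` of `Φ i` orthogonal to `Ψ`.
  set c := star Ψ ⬝ᵥ Φ i with hc
  set x := Φ i - c • Ψ with hx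
  have hxΨ : star x ⬝ᵥ Ψ = 0 := by
    have : star c = star (Φ i) ⬝ᵥ Ψ := by rw [hc, star_dotProduct, star_star, dotProduct_comm]
    rw [hx, star_sub, sub_dotProduct, star_smul, smul_dotProduct, hΨ, ← this]
    simp
  have h0 : ∑ j, P j * Complex.normSq (star x ⬝ᵥ Φ j) = 0 := by
    have h1 := congrArg (fun A => star x ⬝ᵥ (A *ᵥ x)) h
    simp only [sum_mulVec, dotProduct_sum, smul_mulVec, dotProduct_smul, q, hxΨ, zero_mul,
      Complex.star_def, Complex.mul_conj, Complex.real_smul] at h1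
    exact_mod_cast h1
  have h2 := (Finset.sum_eq_zero_iff_of_nonneg
    (fun j _ => mul_nonneg (hP j) (Complex.normSq_nonneg _))).1 h0 i (Finset.mem_univ _)
  have h3 : star x ⬝ᵥ Φ i = 0 := by
    rcases mul_eq_zero.1 h2 with h | h
    · exact absurd h hi
    · exact Complex.normSq_eq_zero.1 h
  have hx0 : x = 0 := by
    rw [← dotProduct_star_self_eq_zero]
    conv_lhs => rw [hx, dotProduct_sub, ← hx, h3, dotProduct_smul, hxΨ]
    simp
  have hΦ : Φ i = c • Ψ := sub_eq_zero.1 hx0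
  have hcc : c * star c = 1 := by
    have := hu i
    rw [hΦ, star_smul, smul_dotProduct, dotProduct_smul, hΨ] at this
    simpa [mul_comm] using this
  rw [hΦ]
  ext a b
  simp only [pureState, vecMulVec_apply, Pi.star_apply, Pi.smul_apply, smul_eq_mul, star_mul']
  calc c * Ψ a * (star c * star (Ψ b)) = c * star c * (Ψ a * star (Ψ b)) := by ring
    _ = _ := by rw [hcc, one_mul]

/-! ### Local operations -/

lemma pureState_mulVec {n m : Type} [Fintype n] (A : Matrix m n ℂ) (ψ : n → ℂ) :
    pureState (A *ᵥ ψ) = A * pureState ψ * Aᴴ := by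
  rw [pureState, pureState, mul_vecMulVec, vecMulVec_mul, star_mulVec]

lemma coeffMatrix_kronecker_one {nA nA' nB : Type} [Fintype nA] [Fintype nB] [DecidableEq nB]
    (A : Matrix nA' nA ℂ) (Ψ : nA × nB → ℂ) :
    coeffMatrix ((A ⊗ₖ (1 : Matrix nB nB ℂ)) *ᵥ Ψ) = A * coeffMatrix Ψ := by
  ext a b
  simp [coeffMatrix, mulVec, dotProduct, mul_apply, Fintype.sum_prod_type, one_apply]

lemma coeffMatrix_one_kronecker {nA nB nB' : Type} [Fintype nA] [DecidableEq nA] [Fintype nB]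
    (B : Matrix nB' nB ℂ) (Ψ : nA × nB → ℂ) :
    coeffMatrix (((1 : Matrix nA nA ℂ) ⊗ₖ B) *ᵥ Ψ) = coeffMatrix Ψ * Bᵀ := by
  ext a b
  simp [coeffMatrix, mulVec, dotProduct, mul_apply, Fintype.sum_prod_type, one_apply,
    mul_comm]

lemma nonempty_of_isKrausFamily {n n' K : Type} [Fintype n] [DecidableEq n] [Fintype n']
    [Fintype K] {M : K → Matrix n' n ℂ} (hM : IsKrausFamily M) [Nonempty n] : Nonempty n' := by
  by_contra h
  rw [not_nonempty_iff] at h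
  obtain ⟨i⟩ := ‹Nonempty n›
  have := congrFun (congrFun hM i) i
  simp [Matrix.sum_apply, mul_apply] at this

/-- An operation on A leaves the reduced state of B unchanged on average, so by concavity
of the entropy on B, and since both reductions of a pure state have the same entropy, the
post-measurement states have on average at most the original entropy. -/
lemma kraus_step_A {S : SFam} {s : List ℝ → ℝ}
    (hconcave : ∀ (n : Type) [Fintype n] [DecidableEq n] (M : ℕ) (P : Fin M → ℝ)
      (σ : Fin M → Matrix n n ℂ), (∀ m, 0 ≤ P m) → (∑ m, P m) = 1 →
      (∀ m, IsDensityMatrix (σ m)) →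
      ∑ m, P m * S n (σ m) ≤ S n (∑ m, P m • σ m))
    (hspec : ∀ (n : Type) [Fintype n] [DecidableEq n] (σ : Matrix n n ℂ)
      (hσ : IsDensityMatrix σ), S n σ = s (nonzeroEigListDesc hσ.1.1))
    {nA nA' nB K : Type} [Fintype nA] [DecidableEq nA] [Fintype nA'] [DecidableEq nA']
    [Fintype nB] [DecidableEq nB] [Fintype K] {M : K → Matrix nA' nA ℂ}
    (hM : IsKrausFamily M) {Ψ : nA × nB → ℂ} (hΨ : star Ψ ⬝ᵥ Ψ = 1) :
    ∃ (p : K → ℝ) (Φ : K → nA' × nB → ℂ), (∀ k, 0 ≤ p k) ∧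
      (∀ k, star (Φ k) ⬝ᵥ Φ k = 1) ∧
      (∀ k, p k • pureState (Φ k) =
        (M k ⊗ₖ (1 : Matrix nB nB ℂ)) * pureState Ψ * (M k ⊗ₖ (1 : Matrix nB nB ℂ))ᴴ) ∧
      ∑ k, p k * S nA' (ptraceB (pureState (Φ k))) ≤ S nA (ptraceB (pureState Ψ)) := by
  obtain ⟨i⟩ := nonempty_of_isDensityMatrix (isDensityMatrix_pureState hΨ)
  have : Nonempty nA := ⟨i.1⟩
  have : Nonempty nB := ⟨i.2⟩
  have : Nonempty nA' := nonempty_of_isKrausFamily hM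
  choose p Φ hp hu h using fun k => exists_normalize ((M k ⊗ₖ (1 : Matrix nB nB ℂ)) *ᵥ Ψ)
  have hA : ∑ k, p k • ptraceA (pureState (Φ k)) = ptraceA (pureState Ψ) := by
    rw [← ptraceA_sum]
    simp only [h]
    have e := ptraceA_sum (fun _ : K => (1 : ℝ))
      (fun k => pureState ((M k ⊗ₖ (1 : Matrix nB nB ℂ)) *ᵥ Ψ))
    simp only [one_smul] at e
    rw [e]
    simp only [ptraceA_pureState, coeffMatrix_kronecker_one]
    rw [← transpose_sum]
    congr 1
    calc ∑ k, (M k * coeffMatrix Ψ)ᴴ * (M k * coeffMatrix Ψ)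
        = (coeffMatrix Ψ)ᴴ * (∑ k, (M k)ᴴ * M k) * coeffMatrix Ψ := by
          simp only [conjTranspose_mul, Matrix.mul_assoc, Matrix.mul_sum, Matrix.sum_mul]
      _ = _ := by rw [show ∑ k, (M k)ᴴ * M k = 1 from hM, Matrix.mul_one]
  have hsum : ∑ k, p k = 1 := by
    refine sum_weights_eq_one hu ?_
    rw [← trace_ptraceA, ptraceA_sum, hA, trace_ptraceA, trace_pureState, hΨ]
  refine ⟨p, Φ, hp, hu, fun k => by rw [h, pureState_mulVec], ?_⟩
  simp only [S_ptrace_comm hspec (hu _), S_ptrace_comm hspec hΨ, ← hA]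
  exact concave_fintype hconcave p _ hp hsum fun k => isDensityMatrix_ptraceA (hu k)

/-- An operation on B leaves the reduced state of A unchanged on average, so the claim is
concavity of the entropy on A. -/
lemma kraus_step_B {S : SFam}
    (hconcave : ∀ (n : Type) [Fintype n] [DecidableEq n] (M : ℕ) (P : Fin M → ℝ)
      (σ : Fin M → Matrix n n ℂ), (∀ m, 0 ≤ P m) → (∑ m, P m) = 1 →
      (∀ m, IsDensityMatrix (σ m)) →
      ∑ m, P m * S n (σ m) ≤ S n (∑ m, P m • σ m))
    {nA nB nB' K : Type} [Fintype nA] [DecidableEq nA] [Fintype nB] [DecidableEq nB]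
    [Fintype nB'] [Fintype K] {M : K → Matrix nB' nB ℂ}
    (hM : IsKrausFamily M) {Ψ : nA × nB → ℂ} (hΨ : star Ψ ⬝ᵥ Ψ = 1) :
    ∃ (p : K → ℝ) (Φ : K → nA × nB' → ℂ), (∀ k, 0 ≤ p k) ∧
      (∀ k, star (Φ k) ⬝ᵥ Φ k = 1) ∧
      (∀ k, p k • pureState (Φ k) =
        ((1 : Matrix nA nA ℂ) ⊗ₖ M k) * pureState Ψ * ((1 : Matrix nA nA ℂ) ⊗ₖ M k)ᴴ) ∧
      ∑ k, p k * S nA (ptraceB (pureState (Φ k))) ≤ S nA (ptraceB (pureState Ψ)) := by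
  obtain ⟨i⟩ := nonempty_of_isDensityMatrix (isDensityMatrix_pureState hΨ)
  have : Nonempty nA := ⟨i.1⟩
  have : Nonempty nB := ⟨i.2⟩
  have : Nonempty nB' := nonempty_of_isKrausFamily hM
  choose p Φ hp hu h using fun k => exists_normalize (((1 : Matrix nA nA ℂ) ⊗ₖ M k) *ᵥ Ψ)
  have hB : ∑ k, p k • ptraceB (pureState (Φ k)) = ptraceB (pureState Ψ) := by
    rw [← ptraceB_sum]
    simp only [h]
    have e := ptraceB_sum (fun _ : K => (1 : ℝ))
      (fun k => pureState (((1 : Matrix nA nA ℂ) ⊗ₖ M k) *ᵥ Ψ))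
    simp only [one_smul] at e
    rw [e]
    simp only [ptraceB_pureState, coeffMatrix_one_kronecker]
    calc ∑ k, (coeffMatrix Ψ * (M k)ᵀ) * (coeffMatrix Ψ * (M k)ᵀ)ᴴ
        = coeffMatrix Ψ * (∑ k, (M k)ᴴ * M k)ᵀ * (coeffMatrix Ψ)ᴴ := by
          simp only [transpose_sum, transpose_mul, conjTranspose_mul, Matrix.mul_assoc,
            Matrix.mul_sum, Matrix.sum_mul]
          rfl
      _ = _ := by
          rw [show ∑ k, (M k)ᴴ * M k = 1 from hM, transpose_one, Matrix.mul_one]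
  have hsum : ∑ k, p k = 1 := by
    refine sum_weights_eq_one hu ?_
    rw [← trace_ptraceB, ptraceB_sum, hB, trace_ptraceB, trace_pureState, hΨ]
  refine ⟨p, Φ, hp, hu, fun k => by rw [h, pureState_mulVec], ?_⟩
  rw [← hB]
  exact concave_fintype hconcave p _ hp hsum fun k => isDensityMatrix_ptraceB (hu k)

/-- A map which is linear on mixtures and sends every pure state to a mixture of pure
states of no larger average entropy does not increase the convex roof. -/
lemma Ecr_mono {S : SFam}
    (hnonneg : ∀ (n : Type) [Fintype n] [DecidableEq n] (σ : Matrix n n ℂ),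
      IsDensityMatrix σ → 0 ≤ S n σ)
    {nA nB nA' nB' K : Type} [Fintype nA] [DecidableEq nA] [Fintype nB] [DecidableEq nB]
    [Fintype nA'] [DecidableEq nA'] [Fintype nB'] [DecidableEq nB'] [Fintype K]
    (L : Matrix (nA × nB) (nA × nB) ℂ → Matrix (nA' × nB') (nA' × nB') ℂ)
    (hL : ∀ (M : ℕ) (P : Fin M → ℝ) (σ : Fin M → Matrix (nA × nB) (nA × nB) ℂ),
      L (∑ m, P m • σ m) = ∑ m, P m • L (σ m))
    (hstep : ∀ Ψ : nA × nB → ℂ, star Ψ ⬝ᵥ Ψ = 1 →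
      ∃ (p : K → ℝ) (Φ : K → nA' × nB' → ℂ), (∀ k, 0 ≤ p k) ∧
        (∀ k, star (Φ k) ⬝ᵥ Φ k = 1) ∧ (∑ k, p k • pureState (Φ k) = L (pureState Ψ)) ∧
        ∑ k, p k * S nA' (ptraceB (pureState (Φ k))) ≤ S nA (ptraceB (pureState Ψ)))
    {ρ : Matrix (nA × nB) (nA × nB) ℂ} (hρ : IsDensityMatrix ρ) :
    Ecr S (L ρ) ≤ Ecr S ρ := by
  refine le_Ecr hρ fun M P Ψ hP hu h => ?_
  choose p Φ hp hΦ hLΦ hle using fun m => hstep (Ψ m) (hu m)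
  calc Ecr S (L ρ)
      ≤ ∑ i : Fin M × K, (P i.1 * p i.1 i.2) *
          S nA' (ptraceB (pureState (Φ i.1 i.2))) := by
        refine Ecr_le hnonneg _ _ (fun i => mul_nonneg (hP _) (hp _ _)) (fun i => hΦ _ _) ?_
        rw [← h, hL, Fintype.sum_prod_type]
        simp only [← hLΦ, Finset.smul_sum, smul_smul]
    _ = ∑ m, P m * ∑ k, p m k * S nA' (ptraceB (pureState (Φ m k))) := by
        rw [Fintype.sum_prod_type]
        simp only [Finset.mul_sum, mul_assoc]
    _ ≤ _ := Finset.sum_le_sum fun m _ => mul_le_mul_of_nonneg_left (hle m) (hP m)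

/-- The vector `Φ ⊗ |k⟩` with the ancilla adjoined to B. -/
def flagB {nA nB K : Type} [DecidableEq K] (k : K) (Φ : nA × nB → ℂ) : nA × nB × K → ℂ :=
  fun x => if x.2.2 = k then Φ (x.1, x.2.1) else 0

/-- The vector `Φ ⊗ |k⟩` with the ancilla adjoined to A. -/
def flagA {nA nB K : Type} [DecidableEq K] (k : K) (Φ : nA × nB → ℂ) : (nA × K) × nB → ℂ :=
  fun x => if x.1.2 = k then Φ (x.1.1, x.2) else 0

lemma ptraceB_flagB {nA nB K : Type} [Fintype nB] [Fintype K] [DecidableEq K] (k : K)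
    (Φ : nA × nB → ℂ) : ptraceB (pureState (flagB k Φ)) = ptraceB (pureState Φ) := by
  ext i j
  simp [ptraceB, pureState, flagB, vecMulVec_apply, Fintype.sum_prod_type, apply_ite]

lemma ptraceA_flagA {nA nB K : Type} [Fintype nA] [Fintype K] [DecidableEq K] (k : K)
    (Φ : nA × nB → ℂ) : ptraceA (pureState (flagA k Φ)) = ptraceA (pureState Φ) := by
  ext i j
  simp [ptraceA, pureState, flagA, vecMulVec_apply, Fintype.sum_prod_type, apply_ite]

lemma flagB_unit {nA nB K : Type} [Fintype nA] [Fintype nB] [Fintype K] [DecidableEq K] (k : K)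
    {Φ : nA × nB → ℂ} (h : star Φ ⬝ᵥ Φ = 1) : star (flagB k Φ) ⬝ᵥ flagB k Φ = 1 := by
  rw [← trace_pureState, ← trace_ptraceB, ptraceB_flagB, trace_ptraceB, trace_pureState, h]

lemma flagA_unit {nA nB K : Type} [Fintype nA] [Fintype nB] [Fintype K] [DecidableEq K] (k : K)
    {Φ : nA × nB → ℂ} (h : star Φ ⬝ᵥ Φ = 1) : star (flagA k Φ) ⬝ᵥ flagA k Φ = 1 := by
  rw [← trace_pureState, ← trace_ptraceA, ptraceA_flagA, trace_ptraceA, trace_pureState, h]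

lemma sum_flagB {nA nB K : Type} [Fintype K] [DecidableEq K] (p : K → ℝ)
    (Φ : K → nA × nB → ℂ) :
    ∑ k, p k • pureState (flagB k (Φ k)) = Matrix.of fun x y =>
      if x.2.2 = y.2.2 then (p x.2.2 • pureState (Φ x.2.2)) (x.1, x.2.1) (y.1, y.2.1) else 0 := by
  ext x y
  rw [Matrix.sum_apply, Finset.sum_eq_single x.2.2]
  · by_cases hxy : x.2.2 = y.2.2 <;>
      simp [pureState, flagB, vecMulVec_apply, hxy, eq_comm]
  · intro k _ hk
    simp [pureState, flagB, vecMulVec_apply, hk.symm]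
  · simp

lemma sum_flagA {nA nB K : Type} [Fintype K] [DecidableEq K] (p : K → ℝ)
    (Φ : K → nA × nB → ℂ) :
    ∑ k, p k • pureState (flagA k (Φ k)) = Matrix.of fun x y =>
      if x.1.2 = y.1.2 then (p x.1.2 • pureState (Φ x.1.2)) (x.1.1, x.2) (y.1.1, y.2) else 0 := by
  ext x y
  rw [Matrix.sum_apply, Finset.sum_eq_single x.1.2]
  · by_cases hxy : x.1.2 = y.1.2 <;>
      simp [pureState, flagA, vecMulVec_apply, hxy, eq_comm]
  · intro k _ hk
    simp [pureState, flagA, vecMulVec_apply, hk.symm]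
  · simp

lemma conj_sum {n m ι : Type} [Fintype n] [Fintype ι] (A : Matrix m n ℂ) (P : ι → ℝ)
    (σ : ι → Matrix n n ℂ) :
    A * (∑ i, P i • σ i) * Aᴴ = ∑ i, P i • (A * σ i * Aᴴ) := by
  simp [Matrix.mul_sum, Matrix.sum_mul]

/-! ### Reduced states and the convex roof -/

/-- By concavity the convex roof never exceeds the entropy of the reduced state. -/
lemma Ecr_le_S {S : SFam}
    (hnonneg : ∀ (n : Type) [Fintype n] [DecidableEq n] (σ : Matrix n n ℂ),
      IsDensityMatrix σ → 0 ≤ S n σ)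
    (hconcave : ∀ (n : Type) [Fintype n] [DecidableEq n] (M : ℕ) (P : Fin M → ℝ)
      (σ : Fin M → Matrix n n ℂ), (∀ m, 0 ≤ P m) → (∑ m, P m) = 1 →
      (∀ m, IsDensityMatrix (σ m)) →
      ∑ m, P m * S n (σ m) ≤ S n (∑ m, P m • σ m))
    {nA nB : Type} [Fintype nA] [DecidableEq nA] [Fintype nB] [DecidableEq nB]
    {ρ : Matrix (nA × nB) (nA × nB) ℂ} (hρ : IsDensityMatrix ρ) :
    Ecr S ρ ≤ S nA (ptraceB ρ) := by
  have := nonempty_of_isDensityMatrix hρ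
  obtain ⟨m, v, hv⟩ := posSemidef_iff_eq_sum_vecMulVec.1 hρ.1
  choose P Ψ hP hu h using fun i => exists_normalize (v i)
  have hsum : ∑ i, P i • pureState (Ψ i) = ρ := by
    rw [hv]
    exact Finset.sum_congr rfl fun i _ => h i
  refine (Ecr_le hnonneg P Ψ hP hu hsum).trans ?_
  conv_rhs => rw [← hsum, ptraceB_sum]
  exact hconcave _ _ _ _ hP (sum_weights_eq_one hu (by rw [hsum, hρ.2]))
    fun i => isDensityMatrix_ptraceB (hu i)

lemma S_le_Ecr_pureState {S : SFam} {nA nB : Type} [Fintype nA] [DecidableEq nA] [Fintype nB]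
    [DecidableEq nB] {Ψ : nA × nB → ℂ} (hΨ : star Ψ ⬝ᵥ Ψ = 1) :
    S nA (ptraceB (pureState Ψ)) ≤ Ecr S (pureState Ψ) := by
  refine le_Ecr (isDensityMatrix_pureState hΨ) fun M P Φ hP hu h => ?_
  have hsum : ∑ m, P m = 1 := sum_weights_eq_one hu (by rw [h, trace_pureState, hΨ])
  have e : ∀ m, P m * S nA (ptraceB (pureState (Φ m))) =
      P m * S nA (ptraceB (pureState Ψ)) := by
    intro m
    by_cases hm : P m = 0
    · rw [hm, zero_mul, zero_mul]
    · rw [pureState_eq_of_sum hP hu hΨ h m hm]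
  simp only [e]
  rw [← Finset.sum_mul, hsum, one_mul]

/-- Every state of A is the reduction of a pure state of a composite system. -/
lemma exists_purification {nA : Type} [Fintype nA] {ρA : Matrix nA nA ℂ}
    (h : IsDensityMatrix ρA) : ∃ (m : ℕ) (Ψ : nA × Fin m → ℂ),
      star Ψ ⬝ᵥ Ψ = 1 ∧ ptraceB (pureState Ψ) = ρA := by
  obtain ⟨m, v, hv⟩ := posSemidef_iff_eq_sum_vecMulVec.1 h.1
  have e : ptraceB (pureState fun x : nA × Fin m => v x.2 x.1) = ρA := by
    ext i j
    rw [hv]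
    simp [ptraceB, pureState, vecMulVec_apply, Matrix.sum_apply]
  exact ⟨m, _, by rw [← trace_pureState, ← trace_ptraceB, e, h.2], e⟩

/-- The convex roof vanishes on separable states: pure product states have pure
reductions. -/
lemma Ecr_separable {S : SFam}
    (hnonneg : ∀ (n : Type) [Fintype n] [DecidableEq n] (σ : Matrix n n ℂ),
      IsDensityMatrix σ → 0 ≤ S n σ)
    (hpure : ∀ (n : Type) [Fintype n] [DecidableEq n] (σ : Matrix n n ℂ),
      IsDensityMatrix σ → IsPureState σ → S n σ = 0)
    {nA nB : Type} [Fintype nA] [DecidableEq nA] [Fintype nB] [DecidableEq nB]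
    {ρ : Matrix (nA × nB) (nA × nB) ℂ} (hs : SeparableState ρ) : Ecr S ρ ≤ 0 := by
  obtain ⟨M, P, φ, χ, hP, -, hφ, hχ, rfl⟩ := hs
  have e : ∀ m, ptraceB (pureState fun q : nA × nB => φ m q.1 * χ m q.2) =
      pureState (φ m) := by
    intro m
    ext i j
    have := hχ m
    simp only [dotProduct, Pi.star_apply] at this
    simp only [ptraceB, pureState, vecMulVec_apply, of_apply, Pi.star_apply, star_mul']
    calc ∑ b, φ m i * χ m b * (star (φ m j) * star (χ m b))
        = φ m i * star (φ m j) * ∑ b, star (χ m b) * χ m b := by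
          rw [Finset.mul_sum]
          exact Finset.sum_congr rfl fun b _ => by ring
      _ = _ := by rw [this, mul_one]
  have hu : ∀ m, star (fun q : nA × nB => φ m q.1 * χ m q.2) ⬝ᵥ
      (fun q : nA × nB => φ m q.1 * χ m q.2) = 1 := by
    intro m
    rw [← trace_pureState, ← trace_ptraceB, e, trace_pureState, hφ]
  refine (Ecr_le hnonneg P _ hP hu rfl).trans (le_of_eq ?_)
  refine Finset.sum_eq_zero fun m _ => ?_
  rw [hpure _ _ (isDensityMatrix_ptraceB (hu m)) ⟨φ m, hφ m, e m⟩, mul_zero]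

/-- If each `S_d` is nonnegative and concave on states, vanishes on pure
states, and depends only on the list of nonzero eigenvalues in decreasing order through a
dimension-independent function `s`, then the convex roof `E^{cr}` is an entanglement
monotone, and for every state `ρ_A` of A the maximum of `E^{cr}(ρ)` over all states `ρ` of
composite systems AB with `tr_B ρ = ρ_A` equals `S_d(ρ_A)`. -/
theorem statement_7 (S : SFam) (s : List ℝ → ℝ)
    (hnonneg : ∀ (n : Type) [Fintype n] [DecidableEq n] (σ : Matrix n n ℂ),
      IsDensityMatrix σ → 0 ≤ S n σ)
    (hconcave : ∀ (n : Type) [Fintype n] [DecidableEq n] (M : ℕ) (P : Fin M → ℝ)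
      (σ : Fin M → Matrix n n ℂ), (∀ m, 0 ≤ P m) → (∑ m, P m) = 1 →
      (∀ m, IsDensityMatrix (σ m)) →
      ∑ m, P m * S n (σ m) ≤ S n (∑ m, P m • σ m))
    (hpure : ∀ (n : Type) [Fintype n] [DecidableEq n] (σ : Matrix n n ℂ),
      IsDensityMatrix σ → IsPureState σ → S n σ = 0)
    (hspec : ∀ (n : Type) [Fintype n] [DecidableEq n] (σ : Matrix n n ℂ)
      (hσ : IsDensityMatrix σ), S n σ = s (nonzeroEigListDesc hσ.1.1)) :
    IsEntanglementMonotone (EcrEM S) ∧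
    ∀ (nA : Type) [Fintype nA] [DecidableEq nA] (ρA : Matrix nA nA ℂ),
      IsDensityMatrix ρA →
      sSup { r : ℝ | ∃ (nB : Type) (_ : Fintype nB) (_ : DecidableEq nB)
          (ρ : Matrix (nA × nB) (nA × nB) ℂ),
          IsDensityMatrix ρ ∧ ptraceB ρ = ρA ∧ r = Ecr S ρ } = S nA ρA := by
  refine ⟨⟨?_, ?_, ?_, ?_, ?_, ?_⟩, ?_⟩
  · intro nA nB _ _ _ _ ρ hρ
    exact le_Ecr hρ fun M P Ψ hP hu _ => Finset.sum_nonneg fun m _ =>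
      mul_nonneg (hP m) (hnonneg _ _ (isDensityMatrix_ptraceB (hu m)))
  · intro nA nB _ _ _ _ ρ hρ hs
    refine le_antisymm (Ecr_separable hnonneg hpure hs) ?_
    exact le_Ecr hρ fun M P Ψ hP hu _ => Finset.sum_nonneg fun m _ =>
      mul_nonneg (hP m) (hnonneg _ _ (isDensityMatrix_ptraceB (hu m)))
  · intro nA nA' nB K _ _ _ _ _ _ _ M hM ρ hρ
    refine Ecr_mono (K := K) hnonneg (krausApplyA M) ?_ ?_ hρ
    · intro m P σ
      simp only [krausApplyA, conj_sum, Finset.smul_sum]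
      exact Finset.sum_comm
    · intro Ψ hΨ
      obtain ⟨p, Φ, hp, hu, h, hle⟩ := kraus_step_A hconcave hspec hM hΨ
      exact ⟨p, Φ, hp, hu, by simp only [h, krausApplyA], hle⟩
  · intro nA nB nB' K _ _ _ _ _ _ _ M hM ρ hρ
    refine Ecr_mono (K := K) hnonneg (krausApplyB M) ?_ ?_ hρ
    · intro m P σ
      simp only [krausApplyB, conj_sum, Finset.smul_sum]
      exact Finset.sum_comm
    · intro Ψ hΨ
      obtain ⟨p, Φ, hp, hu, h, hle⟩ := kraus_step_B hconcave hM hΨ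
      exact ⟨p, Φ, hp, hu, by simp only [h, krausApplyB], hle⟩
  · intro nA nA' nB K _ _ _ _ _ _ _ _ M hM ρ hρ
    refine Ecr_mono (K := K) hnonneg (flaggedKrausA M) ?_ ?_ hρ
    · intro m P σ
      ext x y
      by_cases hxy : x.2.2 = y.2.2 <;>
        simp [flaggedKrausA, conj_sum, Matrix.sum_apply, hxy]
    · intro Ψ hΨ
      obtain ⟨p, Φ, hp, hu, h, hle⟩ := kraus_step_A hconcave hspec hM hΨ
      refine ⟨p, fun k => flagB k (Φ k), hp, fun k => flagB_unit k (hu k), ?_, ?_⟩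
      · rw [sum_flagB]
        simp only [h, flaggedKrausA]
      · simpa only [ptraceB_flagB] using hle
  · intro nA nB nB' K _ _ _ _ _ _ _ _ M hM ρ hρ
    refine Ecr_mono (K := K) hnonneg (flaggedKrausB M) ?_ ?_ hρ
    · intro m P σ
      ext x y
      by_cases hxy : x.1.2 = y.1.2 <;>
        simp [flaggedKrausB, conj_sum, Matrix.sum_apply, hxy]
    · intro Ψ hΨ
      obtain ⟨p, Φ, hp, hu, h, hle⟩ := kraus_step_B hconcave hM hΨ
      refine ⟨p, fun k => flagA k (Φ k), hp, fun k => flagA_unit k (hu k), ?_, ?_⟩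
      · rw [sum_flagA]
        simp only [h, flaggedKrausB]
      · -- The ancilla changes the reduction to A, but not the reduction to B.
        simp only [S_ptrace_comm hspec (flagA_unit _ (hu _)), ptraceA_flagA]
        simpa only [S_ptrace_comm hspec (hu _)] using hle
  · intro nA _ _ ρA hρA
    refine IsGreatest.csSup_eq ⟨?_, ?_⟩
    · obtain ⟨m, Ψ, hΨ, hA⟩ := exists_purification hρA
      refine ⟨Fin m, inferInstance, inferInstance, pureState Ψ,
        isDensityMatrix_pureState hΨ, hA, ?_⟩
      rw [← hA]
      exact le_antisymm (S_le_Ecr_pureState hΨ)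
        (Ecr_le_S hnonneg hconcave (isDensityMatrix_pureState hΨ))
    · rintro r ⟨nB, _, _, ρ, hρ, rfl, rfl⟩
      exact Ecr_le_S hnonneg hconcave hρ

end
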